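/- Let X be a nonempty finite type, let p be a probability mass function on X with p(x) > 0 for every x, and let S ⊆ X with Z := Σ_{x ∉ S} p(x) > 0. Define q(x) := 𝟙[x ∉ S] · p(x) / Z. If r is a probability mass function on X with r(x) = 0 for all x ∈ S and KL(r‖p) = KL(q‖p), then r = q. Hence the minimizer of KL(·‖p) over pmfs vanishing on S is unique. -/

import Mathlib

open scoped Classical

/-- A probability mass function on a finite type: nonnegative and sums to 1. -/
def IsPMF {X : Type*} [Fintype X] (p : X → ℝ) : Prop :=
  (∀ x, 0 ≤ p x) ∧ ∑ x, p x = 1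

/-- Kullback–Leibler divergence with the convention `0 · log 0 = 0`. -/
noncomputable def KL {X : Type*} [Fintype X] (q p : X → ℝ) : ℝ :=
  ∑ x, q x * Real.log (q x / p x)

/-!
Restricted to pmfs vanishing on `S`, the divergence from `p` is the divergence from the weight
`p · 𝟙[Sᶜ]`, and rescaling a weight by `1 / Z` shifts the divergence from it by the constant
`log Z`. Hence `KL r p = KL r q - log Z` for every such `r`, so that comparing divergences from `p`
amounts to comparing them with `KL q q = 0`, and the equality case of the Gibbs inequality applies.
-/

section

variable {X : Type*} [Fintype X] {p q r w : X → ℝ}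

theorem KL_self (q : X → ℝ) : KL q q = 0 :=
  Finset.sum_eq_zero fun x _ => by
    rcases eq_or_ne (q x) 0 with hx | hx
    · rw [hx, zero_mul]
    · rw [div_self hx, Real.log_one, mul_zero]

theorem KL_congr_right (h : ∀ x, r x ≠ 0 → p x = w x) : KL r p = KL r w :=
  Finset.sum_congr rfl fun x _ => by
    rcases eq_or_ne (r x) 0 with hx | hx
    · simp only [hx, zero_mul]
    · rw [h x hx]

theorem KL_div_const_right (hrw : ∀ x, w x = 0 → r x = 0) {c : ℝ} (hc : c ≠ 0) :
    KL r (fun x => w x / c) = KL r w + (∑ x, r x) * Real.log c := by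
  rw [KL, KL, Finset.sum_mul, ← Finset.sum_add_distrib]
  refine Finset.sum_congr rfl fun x _ => ?_
  rcases eq_or_ne (r x) 0 with hx | hx
  · simp only [hx, zero_mul, add_zero]
  · have hratio : r x / w x ≠ 0 := div_ne_zero hx (mt (hrw x) hx)
    rw [div_div_eq_mul_div, mul_div_right_comm, Real.log_mul hratio hc, mul_add]

open InformationTheory in
theorem KL_eq_sum_klFun (hrq : ∀ x, q x = 0 → r x = 0) :
    KL r q = ∑ x, q x * klFun (r x / q x) + ∑ x, r x - ∑ x, q x := by
  rw [KL, ← Finset.sum_add_distrib, ← Finset.sum_sub_distrib]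
  refine Finset.sum_congr rfl fun x _ => ?_
  rcases eq_or_ne (q x) 0 with hx | hx
  · simp only [hx, hrq x hx, zero_mul, add_zero, sub_zero]
  · rw [klFun_apply]
    field_simp
    ring

open InformationTheory in
theorem eq_of_KL_nonpos (hr : ∀ x, 0 ≤ r x) (hq : ∀ x, 0 ≤ q x) (hrq : ∀ x, q x = 0 → r x = 0)
    (hsum : ∑ x, q x ≤ ∑ x, r x) (hKL : KL r q ≤ 0) : r = q := by
  have hratio x : 0 ≤ r x / q x := div_nonneg (hr x) (hq x)
  have hterm : ∀ x ∈ Finset.univ, 0 ≤ q x * klFun (r x / q x) := fun x _ =>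
    mul_nonneg (hq x) (klFun_nonneg (hratio x))
  have hzero : ∑ x, q x * klFun (r x / q x) = 0 :=
    le_antisymm (by linarith [KL_eq_sum_klFun hrq]) (Finset.sum_nonneg hterm)
  funext x
  rcases mul_eq_zero.1 ((Finset.sum_eq_zero_iff_of_nonneg hterm).1 hzero x (Finset.mem_univ x))
    with hx | hx
  · rw [hx, hrq x hx]
  · exact eq_of_div_eq_one ((klFun_eq_zero_iff (hratio x)).1 hx)

theorem IsPMF.sum_pos_of_dominated (hr : IsPMF r) (hw : ∀ x, 0 ≤ w x)
    (hrw : ∀ x, w x = 0 → r x = 0) : 0 < ∑ x, w x := by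
  obtain ⟨x, hx, hrx⟩ : ∃ x ∈ Finset.univ, r x ≠ 0 :=
    Finset.exists_ne_zero_of_sum_ne_zero (hr.2 ▸ one_ne_zero)
  exact Finset.sum_pos' (fun y _ => hw y) ⟨x, hx, (hw x).lt_of_ne' (mt (hrw x) hrx)⟩

/-- The weight `w` rescaled to total mass one; it is the zero function when `w` has total mass
zero. The minimal targeted update of `p` with respect to `S` is the normalization of
`Sᶜ.indicator p`. -/
noncomputable def normalizedWeight (w : X → ℝ) : X → ℝ :=
  fun x => w x / ∑ y, w y

theorem isPMF_normalizedWeight (hw : ∀ x, 0 ≤ w x) (hpos : 0 < ∑ x, w x) :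
    IsPMF (normalizedWeight w) :=
  ⟨fun x => div_nonneg (hw x) hpos.le, by
    simp only [normalizedWeight, ← Finset.sum_div, div_self hpos.ne']⟩

theorem IsPMF.KL_normalizedWeight (hr : IsPMF r) (hrw : ∀ x, w x = 0 → r x = 0)
    (hw : ∑ x, w x ≠ 0) : KL r (normalizedWeight w) = KL r w + Real.log (∑ x, w x) := by
  unfold normalizedWeight
  rw [KL_div_const_right hrw hw, hr.2, one_mul]

theorem IsPMF.eq_normalizedWeight_of_KL_le (hr : IsPMF r) (hw : ∀ x, 0 ≤ w x)
    (hrw : ∀ x, w x = 0 → r x = 0) (hKL : KL r w ≤ KL (normalizedWeight w) w) :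
    r = normalizedWeight w := by
  have hpos : 0 < ∑ x, w x := hr.sum_pos_of_dominated hw hrw
  have hq : IsPMF (normalizedWeight w) := isPMF_normalizedWeight hw hpos
  have hqw : ∀ x, w x = 0 → normalizedWeight w x = 0 := fun x hx => by
    rw [normalizedWeight, hx, zero_div]
  have hrq : ∀ x, normalizedWeight w x = 0 → r x = 0 := fun x hx =>
    hrw x ((div_eq_zero_iff.1 hx).resolve_right hpos.ne')
  refine eq_of_KL_nonpos hr.1 hq.1 hrq (hq.2.trans hr.2.symm).le ?_
  calc KL r (normalizedWeight w)
      = KL r w + Real.log (∑ x, w x) := hr.KL_normalizedWeight hrw hpos.ne'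
    _ ≤ KL (normalizedWeight w) w + Real.log (∑ x, w x) := by gcongr
    _ = KL (normalizedWeight w) (normalizedWeight w) := (hq.KL_normalizedWeight hqw hpos.ne').symm
    _ = 0 := KL_self _

theorem KL_indicator_compl {S : Set X} (hrS : ∀ x ∈ S, r x = 0) :
    KL r (Sᶜ.indicator p) = KL r p :=
  KL_congr_right fun x hx => Set.indicator_of_mem (mt (hrS x) hx) p

theorem normalizedWeight_indicator_compl (p : X → ℝ) (S : Set X) (x : X) :
    normalizedWeight (Sᶜ.indicator p) x =
      if x ∈ S then 0 else p x / ∑ y ∈ Finset.univ.filter (fun y => y ∉ S), p y := by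
  simp only [normalizedWeight, Set.indicator_apply, Set.mem_compl_iff, Finset.sum_filter, ite_not,
    ite_div, zero_div]

theorem minimal_targeted_update_unique_general {S : Set X} (hp : ∀ x ∉ S, 0 ≤ p x) {Z : ℝ}
    (hZ : Z = ∑ x ∈ Finset.univ.filter (fun x => x ∉ S), p x)
    (hq : ∀ x, q x = if x ∈ S then 0 else p x / Z) (hr : IsPMF r) (hrS : ∀ x ∈ S, r x = 0)
    (hrp : ∀ x ∉ S, p x = 0 → r x = 0) (hKL : KL r p ≤ KL q p) : r = q := by
  have hqS : ∀ x ∈ S, q x = 0 := fun x hx => by rw [hq, if_pos hx]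
  have hq_eq : q = normalizedWeight (Sᶜ.indicator p) := funext fun x => by
    rw [hq, hZ, normalizedWeight_indicator_compl]
  have hrw : ∀ x, Sᶜ.indicator p x = 0 → r x = 0 := fun x hx => by
    by_cases hxS : x ∈ S
    · exact hrS x hxS
    · exact hrp x hxS ((Set.indicator_of_mem hxS p).symm.trans hx)
  rw [← KL_indicator_compl hrS, ← KL_indicator_compl hqS, hq_eq] at hKL
  rw [hq_eq]
  exact hr.eq_normalizedWeight_of_KL_le (fun x => Set.indicator_apply_nonneg (hp x)) hrw hKL

end

/-- Uniqueness: any pmf `r` vanishing on `S` whose reverse KL divergence to `p` equals that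
of the minimal targeted update `q` must equal `q`. -/
theorem minimal_targeted_update_unique
    {X : Type*} [Fintype X] [Nonempty X]
    (p : X → ℝ) (hpmf : IsPMF p) (hp : ∀ x, 0 < p x)
    (S : Set X)
    (Z : ℝ) (hZ : Z = ∑ x ∈ Finset.univ.filter (fun x => x ∉ S), p x) (hZpos : 0 < Z)
    (q : X → ℝ) (hq : ∀ x, q x = if x ∈ S then 0 else p x / Z) :
    ∀ r : X → ℝ, IsPMF r → (∀ x ∈ S, r x = 0) → KL r p = KL q p → r = q := by
  intro r hr hrS hKL
  exact minimal_targeted_update_unique_general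
    (fun x _ => (hp x).le) hZ hq hr hrS (fun x _ hx => absurd hx (hp x).ne') hKL.le
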